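/- Let r > r₀ > 0, d > 1, and let P ⊂ ℝ^d be a finite set of at least two points with circumradius r₀. Then Vol_d(S_{r,r₀,d}) ≤ Vol_d(conv_r P), where S_{r,r₀,d} is the r-spindle of circumradius r₀. -/

import Mathlib

open Metric Set MeasureTheory Pointwise RealInnerProductSpace

variable {d : ℕ}

/-- The `r`-ball body generated by `X`: the intersection of all closed balls of
radius `r` centered at points of `X`. -/
def ballBody (r : ℝ) (X : Set (EuclideanSpace ℝ (Fin d))) :
    Set (EuclideanSpace ℝ (Fin d)) :=
  ⋂ x ∈ X, closedBall x r

/-- The `r`-ball convex hull of `X`: the intersection of all closed balls of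
radius `r` containing `X`. -/
def ballHull (r : ℝ) (X : Set (EuclideanSpace ℝ (Fin d))) :
    Set (EuclideanSpace ℝ (Fin d)) :=
  ⋂ y ∈ {y : EuclideanSpace ℝ (Fin d) | X ⊆ closedBall y r}, closedBall y r

/-!
Translate so that the circumcentre is the origin. The contact points `q` of the circumsphere then
have `0` in their convex hull, so the Voronoi cones of the contact points cover the space and each
of them lies in the half-space `0 ≤ ⟪q, z⟫`. Within the Voronoi cone of `q`, the spindle with ends
`q` and `-q` is contained in the ball hull of the contact points. All these spindles are congruent,
so it suffices that each of them fills at least as large a fraction of its Voronoi cone as of the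
whole space, fractions being measured against the unit ball.

Averaging over the rotations about the line `ℝ q`, this fraction can be computed one half-plane
bounded by that line at a time. In a half-plane the cone is a sector adjacent to the ray through
`q`, and the spindle extends farther in directions closer to this ray. Hence some dilate of the ball
lies inside the spindle within the sector and contains the spindle in the rest of the quarter-plane.
-/

section Rotation

variable {E : Type*} [NormedAddCommGroup E] [InnerProductSpace ℝ E]

/-- Turns every point about the subspace `K` into the half-space `K + ℝ≥0 • ω`, where `ω` is a unit
vector orthogonal to `K`. -/
noncomputable def rotateOnto (K : Submodule ℝ E) [K.HasOrthogonalProjection]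
    (ω : sphere (0 : Kᗮ) 1) (z : E) : E :=
  K.starProjection z + ‖Kᗮ.starProjection z‖ • ((ω : Kᗮ) : E)

variable (K : Submodule ℝ E) [K.HasOrthogonalProjection]

lemma continuous_rotateOnto :
    Continuous fun p : sphere (0 : Kᗮ) 1 × E => rotateOnto K p.1 p.2 := by
  unfold rotateOnto
  fun_prop

lemma rotateOnto_smul (ω : sphere (0 : Kᗮ) 1) {t : ℝ} (ht : 0 ≤ t) (z : E) :
    rotateOnto K ω (t • z) = t • rotateOnto K ω z := by
  simp only [rotateOnto, map_smul, norm_smul, Real.norm_of_nonneg ht, smul_add, mul_smul]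

lemma starProjection_rotateOnto (ω : sphere (0 : Kᗮ) 1) (z : E) :
    K.starProjection (rotateOnto K ω z) = K.starProjection z := by
  rw [rotateOnto, map_add, map_smul,
    K.starProjection_eq_self_iff.2 (K.starProjection_apply_mem z),
    K.starProjection_apply_eq_zero_iff.2 (ω : Kᗮ).2, smul_zero, add_zero]

lemma norm_starProjection_orthogonal_rotateOnto (ω : sphere (0 : Kᗮ) 1) (z : E) :
    ‖Kᗮ.starProjection (rotateOnto K ω z)‖ = ‖Kᗮ.starProjection z‖ := by
  rw [Submodule.starProjection_orthogonal_val, starProjection_rotateOnto, rotateOnto,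
    add_sub_cancel_left, norm_smul, norm_norm, ← Submodule.coe_norm, norm_eq_of_mem_sphere, mul_one]

lemma norm_rotateOnto (ω : sphere (0 : Kᗮ) 1) (z : E) : ‖rotateOnto K ω z‖ = ‖z‖ := by
  rw [← sq_eq_sq₀ (norm_nonneg _) (norm_nonneg _), K.norm_sq_eq_add_norm_sq_starProjection,
    K.norm_sq_eq_add_norm_sq_starProjection z, starProjection_rotateOnto,
    norm_starProjection_orthogonal_rotateOnto]

lemma inner_rotateOnto {x : E} (hx : x ∈ K) (ω : sphere (0 : Kᗮ) 1) (z : E) :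
    ⟪x, rotateOnto K ω z⟫ = ⟪x, z⟫ := by
  rw [← K.starProjection_eq_self_iff.2 hx, K.inner_starProjection_left_eq_right,
    starProjection_rotateOnto, ← K.inner_starProjection_left_eq_right]

end Rotation

section Averaging

variable {E : Type*} [NormedAddCommGroup E] [InnerProductSpace ℝ E] [FiniteDimensional ℝ E]
  [MeasurableSpace E] [BorelSpace E]

lemma measurePreserving_smul_toSphere [Nontrivial E] (μ : Measure E) [μ.IsAddHaarMeasure] :
    MeasurePreserving (fun p : sphere (0 : E) 1 × Ioi (0 : ℝ) => (p.2 : ℝ) • (p.1 : E))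
      (μ.toSphere.prod (.volumeIoiPow (Module.finrank ℝ E - 1))) μ := by
  have hpolar := μ.measurePreserving_homeomorphUnitSphereProd.symm
    (homeomorphUnitSphereProd E).toMeasurableEquiv
  have hval : MeasurePreserving (Subtype.val : ({0}ᶜ : Set E) → E) (μ.comap (↑)) μ := by
    refine ⟨measurable_subtype_coe, ?_⟩
    rw [(MeasurableEmbedding.subtype_coe (measurableSet_singleton _).compl).map_comap,
      Subtype.range_coe, restrict_compl_singleton]
  exact hval.comp hpolar

lemma measurePreserving_norm_smul_toSphere [Nontrivial E] (μ : Measure E)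
    [μ.IsAddHaarMeasure] :
    MeasurePreserving (fun p : sphere (0 : E) 1 × E => ‖p.2‖ • (p.1 : E))
      (μ.toSphere.prod μ) (μ.toSphere univ • μ) := by
  let ρ := Measure.volumeIoiPow (Module.finrank ℝ E - 1)
  have hpolar := measurePreserving_smul_toSphere μ
  have hforget : MeasurePreserving (Prod.map id Prod.snd)
      (μ.toSphere.prod (μ.toSphere.prod ρ)) (μ.toSphere univ • μ.toSphere.prod ρ) := by
    rw [← Measure.prod_smul_right, ← Measure.map_snd_prod]
    exact (MeasurePreserving.id _).prod ⟨measurable_snd, rfl⟩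
  refine ⟨by fun_prop, ?_⟩
  rw [← ((MeasurePreserving.id μ.toSphere).prod hpolar).map_eq,
    Measure.map_map (by fun_prop) (by fun_prop),
    ← ((hpolar.smul_measure (μ.toSphere univ)).comp hforget).map_eq]
  congr 1
  ext ⟨ω, θ, t⟩
  simp [norm_smul, abs_of_pos (mem_Ioi.1 t.2)]

lemma measurePreserving_rotateOnto (K : Submodule ℝ E) [Nontrivial Kᗮ] (ν : Measure Kᗮ)
    [ν.IsAddHaarMeasure] (μ : Measure E) [μ.IsAddHaarMeasure] :
    MeasurePreserving (fun p : sphere (0 : Kᗮ) 1 × E => rotateOnto K p.1 p.2)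
      (ν.toSphere.prod μ) (ν.toSphere univ • μ) := by
  let σ := ν.toSphere
  let L : (Kᗮ × K) ≃L[ℝ] E :=
    (Kᗮ.prodEquivOfIsCompl K K.isCompl_orthogonal.symm).toContinuousLinearEquiv
  let κ : Measure (Kᗮ × K) := ν.prod Measure.addHaar
  have := L.isAddHaarMeasure_map κ
  have hL : MeasurePreserving L κ (κ.map L) := ⟨by fun_prop, rfl⟩
  have hfold : MeasurePreserving
      (fun p : sphere (0 : Kᗮ) 1 × Kᗮ × K => (‖p.2.1‖ • (p.1 : Kᗮ), p.2.2))
      (σ.prod κ) (σ univ • κ) := by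
    rw [← Measure.prod_smul_left]
    exact ((measurePreserving_norm_smul_toSphere ν).prod (MeasurePreserving.id _)).comp
      ((measurePreserving_prodAssoc σ ν Measure.addHaar).symm MeasurableEquiv.prodAssoc)
  have hrotate (ω : sphere (0 : Kᗮ) 1) (p : Kᗮ × K) :
      rotateOnto K ω (L p) = L (‖p.1‖ • (ω : Kᗮ), p.2) := by
    have hL_apply (q : Kᗮ × K) : L q = q.1 + q.2 := rfl
    rw [hL_apply, hL_apply, rotateOnto, map_add, map_add,
      K.starProjection_apply_eq_zero_iff.2 p.1.2, K.starProjection_eq_self_iff.2 p.2.2,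
      Kᗮ.starProjection_eq_self_iff.2 p.1.2,
      Kᗮ.starProjection_apply_eq_zero_iff.2 (K.le_orthogonal_orthogonal p.2.2), zero_add, add_zero,
      add_comm, Submodule.coe_norm, Submodule.coe_smul]
  refine ⟨(continuous_rotateOnto K).measurable, ?_⟩
  rw [Measure.isAddLeftInvariant_eq_smul μ (κ.map L), Measure.prod_smul_right, Measure.map_smul,
    smul_comm, ← ((MeasurePreserving.id σ).prod hL).map_eq,
    Measure.map_map (continuous_rotateOnto K).measurable (by fun_prop),
    ← ((hL.smul_measure (σ univ)).comp hfold).map_eq]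
  congr 2
  ext ⟨ω, p⟩
  exact hrotate ω p

end Averaging

section ConeComparison

lemma measure_inter_mul_measure_le_of_sdiff_le {α : Type*} [MeasurableSpace α] {μ : Measure α}
    {A B S : Set α} (hA : MeasurableSet A) (t : ENNReal) (hinter : t * μ (B ∩ A) ≤ μ (S ∩ A))
    (hsdiff : μ (S \ A) ≤ t * μ (B \ A)) :
    μ (B ∩ A) * μ S ≤ μ (S ∩ A) * μ B := by
  calc μ (B ∩ A) * μ S
      = μ (B ∩ A) * μ (S ∩ A) + μ (B ∩ A) * μ (S \ A) := by
        rw [← mul_add, measure_inter_add_sdiff S hA]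
    _ ≤ μ (B ∩ A) * μ (S ∩ A) + μ (B ∩ A) * (t * μ (B \ A)) := by gcongr
    _ = μ (S ∩ A) * μ (B ∩ A) + t * μ (B ∩ A) * μ (B \ A) := by ring
    _ ≤ μ (S ∩ A) * μ (B ∩ A) + μ (S ∩ A) * μ (B \ A) := by gcongr
    _ = μ (S ∩ A) * μ B := by rw [← mul_add, measure_inter_add_sdiff B hA]

variable {E : Type*} [NormedAddCommGroup E] [NormedSpace ℝ E]

lemma exists_smul_closedBall_inter_subset_and_sdiff_subset {A H S : Set E}
    (hAcone : ∀ ⦃t : ℝ⦄, 0 ≤ t → ∀ ⦃z⦄, z ∈ A → t • z ∈ A)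
    (hHcone : ∀ ⦃t : ℝ⦄, 0 ≤ t → ∀ ⦃z⦄, z ∈ H → t • z ∈ H)
    (hSclosed : IsClosed S) (hSbdd : Bornology.IsBounded S) (hS0 : 0 ∈ S)
    (hS : ∀ z ∈ A, ∀ w ∈ (S ∩ H) \ A, ‖z‖ ≤ ‖w‖ → z ∈ S) :
    ∃ t : ℝ, 0 ≤ t ∧ t • (closedBall 0 1 ∩ A) ⊆ S ∩ A ∧
      (S ∩ H) \ A ⊆ t • ((closedBall 0 1 ∩ H) \ A) := by
  -- `hS` puts the points of `A` of norm less than `t` in `S`, closedness of `S` those of norm `t`.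
  let t := sSup (norm '' ((S ∩ H) \ A))
  have ht : 0 ≤ t := Real.sSup_nonneg (forall_mem_image.2 fun w _ => norm_nonneg w)
  have hbdd : BddAbove (norm '' ((S ∩ H) \ A)) :=
    let ⟨C, hC⟩ := hSbdd.exists_norm_le
    ⟨C, forall_mem_image.2 fun w hw => hC w hw.1.1⟩
  refine ⟨t, ht, ?_, fun w hw => ?_⟩
  · rintro _ ⟨z, ⟨hzball, hzA⟩, rfl⟩
    refine ⟨?_, hAcone ht hzA⟩
    have hray : Ico 0 t ⊆ (· • z) ⁻¹' S := by
      rintro s ⟨hs, hst⟩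
      have hne : ((S ∩ H) \ A).Nonempty := by
        by_contra h
        have : t = 0 := by simp [t, not_nonempty_iff_eq_empty.1 h]
        linarith
      obtain ⟨_, ⟨w, hw, rfl⟩, hsw⟩ := exists_lt_of_lt_csSup (hne.image norm) hst
      refine hS _ (hAcone hs hzA) w hw ?_
      rw [norm_smul, Real.norm_of_nonneg hs]
      exact (mul_le_of_le_one_right hs (mem_closedBall_zero_iff.1 hzball)).trans hsw.le
    rcases ht.eq_or_lt with ht0 | ht0
    · simpa [← ht0] using hS0
    · have hclosed : IsClosed ((· • z) ⁻¹' S : Set ℝ) := hSclosed.preimage (by fun_prop)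
      have := closure_minimal hray hclosed
      rw [closure_Ico ht0.ne] at this
      exact this (right_mem_Icc.2 ht)
  · have hwt : ‖w‖ ≤ t := le_csSup hbdd (mem_image_of_mem _ hw)
    have hw_eq : t • t⁻¹ • w = w := by
      rcases ht.eq_or_lt with ht0 | ht0
      · have : w = 0 := norm_le_zero_iff.1 (ht0 ▸ hwt)
        simp [this]
      · exact smul_inv_smul₀ ht0.ne' w
    refine ⟨t⁻¹ • w, ⟨⟨?_, hHcone (by positivity) hw.1.2⟩, fun h => hw.2 ?_⟩, hw_eq⟩
    · rw [mem_closedBall_zero_iff, norm_smul, norm_inv, Real.norm_of_nonneg ht]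
      exact inv_mul_le_one_of_le₀ hwt ht
    · exact hw_eq ▸ hAcone ht h

lemma measure_closedBall_inter_mul_measure_le_of_cone [FiniteDimensional ℝ E] [MeasurableSpace E]
    [BorelSpace E] (μ : Measure E) [μ.IsAddHaarMeasure] {A H S : Set E} (hA : MeasurableSet A)
    (hAH : A ⊆ H) (hAcone : ∀ ⦃t : ℝ⦄, 0 ≤ t → ∀ ⦃z⦄, z ∈ A → t • z ∈ A)
    (hHcone : ∀ ⦃t : ℝ⦄, 0 ≤ t → ∀ ⦃z⦄, z ∈ H → t • z ∈ H)
    (hSclosed : IsClosed S) (hSbdd : Bornology.IsBounded S) (hS0 : 0 ∈ S)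
    (hS : ∀ z ∈ A, ∀ w ∈ (S ∩ H) \ A, ‖z‖ ≤ ‖w‖ → z ∈ S) :
    μ (closedBall 0 1 ∩ A) * μ (S ∩ H) ≤ μ (S ∩ A) * μ (closedBall 0 1 ∩ H) := by
  obtain ⟨t, ht, hinter, hsdiff⟩ :=
    exists_smul_closedBall_inter_subset_and_sdiff_subset hAcone hHcone hSclosed hSbdd hS0 hS
  have hHA (X : Set E) : X ∩ H ∩ A = X ∩ A := by
    rw [inter_assoc, inter_eq_self_of_subset_right hAH]
  have := measure_inter_mul_measure_le_of_sdiff_le (μ := μ) (B := closedBall 0 1 ∩ H) (S := S ∩ H)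
    hA (ENNReal.ofReal (t ^ Module.finrank ℝ E))
    (by rw [hHA, hHA, ← Measure.addHaar_smul_of_nonneg μ ht]; exact measure_mono hinter)
    (by rw [← Measure.addHaar_smul_of_nonneg μ ht]; exact measure_mono hsdiff)
  rwa [hHA, hHA] at this

end ConeComparison

section Spindle

variable {E : Type*} [NormedAddCommGroup E] [InnerProductSpace ℝ E]

/-- The `r`-spindle with ends `x` and `-x`, where `r ^ 2 = c ^ 2 + ‖x‖ ^ 2`: the intersection of the
balls of radius `r` centred at the points `c • v` with `v` a unit vector orthogonal to `x`. The
inequality is `‖z - c • v‖ ≤ r` for the `v` opposite to the orthogonal projection of `z`. -/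
def spindle (c : ℝ) (x : E) : Set E :=
  {z | ‖z‖ ^ 2 + 2 * c * ‖(ℝ ∙ x)ᗮ.starProjection z‖ ≤ ‖x‖ ^ 2}

lemma isClosed_spindle (c : ℝ) (x : E) : IsClosed (spindle c x) :=
  isClosed_le (by fun_prop) (by fun_prop)

lemma zero_mem_spindle (c : ℝ) (x : E) : 0 ∈ spindle c x := by
  simp [spindle]

lemma spindle_subset_closedBall {c : ℝ} (hc : 0 ≤ c) (x : E) :
    spindle c x ⊆ closedBall 0 ‖x‖ := by
  intro z (hz : _ ≤ ‖x‖ ^ 2)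
  rw [mem_closedBall_zero_iff, ← sq_le_sq₀ (norm_nonneg _) (norm_nonneg _)]
  exact (le_add_of_nonneg_right (by positivity)).trans hz

lemma neg_mem_spindle_iff {c : ℝ} {x z : E} : -z ∈ spindle c x ↔ z ∈ spindle c x := by
  rw [spindle, mem_ofPred, mem_ofPred, map_neg, norm_neg, norm_neg]

lemma rotateOnto_mem_spindle_iff {c : ℝ} {x z : E} (ω : sphere (0 : (ℝ ∙ x)ᗮ) 1) :
    rotateOnto (ℝ ∙ x) ω z ∈ spindle c x ↔ z ∈ spindle c x := by
  rw [spindle, mem_ofPred, mem_ofPred, norm_rotateOnto, norm_starProjection_orthogonal_rotateOnto]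

lemma map_mem_spindle_iff {F : Type*} [NormedAddCommGroup F] [InnerProductSpace ℝ F]
    (f : E ≃ₗᵢ[ℝ] F) {c : ℝ} {x z : E} : f z ∈ spindle c (f x) ↔ z ∈ spindle c x := by
  have hproj : (ℝ ∙ f x)ᗮ.starProjection (f z) = f ((ℝ ∙ x)ᗮ.starProjection z) := by
    rw [Submodule.starProjection_orthogonal_val, Submodule.starProjection_orthogonal_val,
      Submodule.starProjection_singleton, Submodule.starProjection_singleton, map_sub, map_smul,
      f.inner_map_map, f.norm_map]
  rw [spindle, spindle, mem_ofPred, mem_ofPred, hproj, f.norm_map, f.norm_map, f.norm_map]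

lemma volume_spindle_eq_of_norm_eq [FiniteDimensional ℝ E] [MeasurableSpace E] [BorelSpace E]
    (c : ℝ) {x y : E} (h : ‖x‖ = ‖y‖) : volume (spindle c x) = volume (spindle c y) := by
  let f := (ℝ ∙ (x - y))ᗮ.reflection
  have hpreimage : f ⁻¹' spindle c y = spindle c x := by
    ext z
    rw [mem_preimage, ← Submodule.reflection_sub h, map_mem_spindle_iff]
  rw [← hpreimage,
    f.measurePreserving.measure_preimage (isClosed_spindle c y).measurableSet.nullMeasurableSet]

lemma mem_spindle_of_norm_le {c : ℝ} (hc : 0 ≤ c) {x z w : E} (hw : w ∈ spindle c x)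
    (hnorm : ‖z‖ ≤ ‖w‖)
    (hproj : ‖(ℝ ∙ x)ᗮ.starProjection z‖ ≤ ‖(ℝ ∙ x)ᗮ.starProjection w‖) : z ∈ spindle c x := by
  refine le_trans ?_ (mem_ofPred.1 hw)
  gcongr

end Spindle

section HalfSpace

variable {E : Type*} [NormedAddCommGroup E] [InnerProductSpace ℝ E] [FiniteDimensional ℝ E]
  [MeasurableSpace E] [BorelSpace E] (μ : Measure E) [μ.IsAddHaarMeasure]

lemma measure_hyperplane_eq_zero {x : E} (hx : x ≠ 0) : μ {z | ⟪x, z⟫ = 0} = 0 := by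
  have htop : (ℝ ∙ x)ᗮ ≠ ⊤ := by simp [Submodule.orthogonal_eq_top_iff, hx]
  convert Measure.addHaar_submodule μ _ htop
  ext z
  exact Submodule.mem_orthogonal_singleton_iff_inner_right.symm

lemma measure_eq_two_mul_measure_inter_halfSpace {x : E} (hx : x ≠ 0) {X : Set E}
    (hX : ∀ z, -z ∈ X ↔ z ∈ X) : μ X = 2 * μ (X ∩ {z | 0 ≤ ⟪x, z⟫}) := by
  have hH : MeasurableSet {z : E | 0 ≤ ⟪x, z⟫} :=
    (isClosed_le continuous_const (by fun_prop)).measurableSet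
  have hopposite : μ (X \ {z | 0 ≤ ⟪x, z⟫}) = μ (X ∩ {z | 0 ≤ ⟪x, z⟫}) := by
    have hneg : -(X \ {z | 0 ≤ ⟪x, z⟫}) = (X ∩ {z | 0 ≤ ⟪x, z⟫}) \ {z | ⟪x, z⟫ = 0} := by
      ext z
      simp only [mem_inter_iff, mem_neg, mem_sdiff, mem_ofPred, hX, inner_neg_right, neg_nonneg,
        not_le, and_assoc, lt_iff_le_and_ne, ne_comm (a := (0 : ℝ)), ne_eq]
    rw [← Measure.measure_neg, hneg, measure_sdiff_null (measure_hyperplane_eq_zero μ hx)]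
  rw [← measure_inter_add_sdiff X hH, hopposite, two_mul]

end HalfSpace

section ConeInequality

variable {E : Type*} [NormedAddCommGroup E] [InnerProductSpace ℝ E]

lemma rotateOnto_span_singleton (x z : E) (ω : sphere (0 : (ℝ ∙ x)ᗮ) 1) :
    rotateOnto (ℝ ∙ x) ω z =
      (⟪x, z⟫ / ‖x‖ ^ 2) • x + ‖(ℝ ∙ x)ᗮ.starProjection z‖ • ((ω : (ℝ ∙ x)ᗮ) : E) := by
  rw [rotateOnto, Submodule.starProjection_singleton]
  rfl

lemma inner_le_inner_of_norm_le {x z w : E} (hw : 0 ≤ ⟪x, w⟫) (hnorm : ‖z‖ ≤ ‖w‖)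
    (hproj : ‖(ℝ ∙ x)ᗮ.starProjection w‖ ≤ ‖(ℝ ∙ x)ᗮ.starProjection z‖) :
    ⟪x, z⟫ ≤ ⟪x, w⟫ := by
  rcases eq_or_ne x 0 with rfl | hx
  · simp
  have hpythagoras (y : E) :
      ‖y‖ ^ 2 = (⟪x, y⟫ / ‖x‖) ^ 2 + ‖(ℝ ∙ x)ᗮ.starProjection y‖ ^ 2 := by
    rw [Submodule.norm_sq_eq_add_norm_sq_starProjection y (ℝ ∙ x),
      Submodule.starProjection_singleton, norm_smul, Real.norm_eq_abs, mul_pow, sq_abs]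
    have := norm_ne_zero_iff.2 hx
    simp
    field_simp
  have hsq : (⟪x, z⟫ / ‖x‖) ^ 2 ≤ (⟪x, w⟫ / ‖x‖) ^ 2 := by
    have := pow_le_pow_left₀ (norm_nonneg z) hnorm 2
    have := pow_le_pow_left₀ (norm_nonneg _) hproj 2
    linarith [hpythagoras z, hpythagoras w]
  exact (div_le_div_iff_of_pos_right (norm_pos_iff.2 hx)).1
    (abs_le_of_sq_le_sq' hsq (by positivity)).2

lemma rotateOnto_mem_of_norm_le {D : PointedCone ℝ E} {x z w : E} (hx : x ∈ D)
    (ω : sphere (0 : (ℝ ∙ x)ᗮ) 1) (hz : rotateOnto (ℝ ∙ x) ω z ∈ D) (hzpos : 0 ≤ ⟪x, z⟫)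
    (hw : 0 ≤ ⟪x, w⟫) (hnorm : ‖z‖ ≤ ‖w‖)
    (hproj : ‖(ℝ ∙ x)ᗮ.starProjection w‖ ≤ ‖(ℝ ∙ x)ᗮ.starProjection z‖) :
    rotateOnto (ℝ ∙ x) ω w ∈ D := by
  let slope := ‖(ℝ ∙ x)ᗮ.starProjection w‖ / ‖(ℝ ∙ x)ᗮ.starProjection z‖
  have hslope : slope * ‖(ℝ ∙ x)ᗮ.starProjection z‖ = ‖(ℝ ∙ x)ᗮ.starProjection w‖ :=
    div_mul_cancel_of_imp fun h => le_antisymm (h ▸ hproj) (norm_nonneg _)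
  have hcoeff : 0 ≤ (⟪x, w⟫ - slope * ⟪x, z⟫) / ‖x‖ ^ 2 := by
    have hslope_le : slope ≤ 1 := div_le_one_of_le₀ hproj (norm_nonneg _)
    have := mul_le_of_le_one_left hzpos hslope_le
    have := inner_le_inner_of_norm_le hw hnorm hproj
    exact div_nonneg (by linarith) (by positivity)
  have hcomb : rotateOnto (ℝ ∙ x) ω w =
      slope • rotateOnto (ℝ ∙ x) ω z + ((⟪x, w⟫ - slope * ⟪x, z⟫) / ‖x‖ ^ 2) • x := by
    rw [rotateOnto_span_singleton, rotateOnto_span_singleton, ← hslope]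
    module
  rw [hcomb]
  exact add_mem (D.smul_mem (by positivity) hz) (D.smul_mem hcoeff hx)

lemma nontrivial_orthogonal_span_singleton (hE : 1 < Module.finrank ℝ E) (x : E) :
    Nontrivial (ℝ ∙ x)ᗮ := by
  rw [Submodule.nontrivial_iff_ne_bot, ne_eq, Submodule.orthogonal_eq_bot_iff]
  intro htop
  have hle : Module.finrank ℝ (ℝ ∙ x) ≤ 1 := by simpa using finrank_span_le_card ({x} : Set E)
  rw [htop, finrank_top] at hle
  omega

variable [FiniteDimensional ℝ E] [MeasurableSpace E] [BorelSpace E]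

lemma lintegral_measure_inter_preimage_rotateOnto (K : Submodule ℝ E) [Nontrivial Kᗮ]
    (ν : Measure Kᗮ) [ν.IsAddHaarMeasure] (μ : Measure E) [μ.IsAddHaarMeasure] {S X : Set E}
    (hS : MeasurableSet S) (hX : MeasurableSet X)
    (hSrotate : ∀ ω z, rotateOnto K ω z ∈ S ↔ z ∈ S) :
    ∫⁻ ω, μ (S ∩ rotateOnto K ω ⁻¹' X) ∂ν.toSphere = ν.toSphere univ * μ (S ∩ X) := by
  have hpreimage (ω : sphere (0 : Kᗮ) 1) :
      S ∩ rotateOnto K ω ⁻¹' X = rotateOnto K ω ⁻¹' (S ∩ X) := by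
    ext z
    rw [mem_inter_iff, mem_preimage, mem_preimage, mem_inter_iff, hSrotate]
  have h := measurePreserving_rotateOnto K ν μ
  rw [← smul_eq_mul, ← Measure.smul_apply, ← h.measure_preimage (hS.inter hX).nullMeasurableSet,
    Measure.prod_apply (h.measurable (hS.inter hX))]
  simp_rw [hpreimage]
  rfl

variable (μ : Measure E) [μ.IsAddHaarMeasure]

lemma measure_closedBall_inter_preimage_rotateOnto_le {c : ℝ} (hc : 0 ≤ c) {x : E} (hx : x ≠ 0)
    (D : ProperCone ℝ E) (hxD : x ∈ D) (hD : ∀ z ∈ D, 0 ≤ ⟪x, z⟫) (ω : sphere (0 : (ℝ ∙ x)ᗮ) 1) :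
    μ (closedBall 0 1 ∩ rotateOnto (ℝ ∙ x) ω ⁻¹' D) * μ (spindle c x) ≤
      μ (spindle c x ∩ rotateOnto (ℝ ∙ x) ω ⁻¹' D) * μ (closedBall 0 1) := by
  have hinner (z : E) : ⟪x, rotateOnto (ℝ ∙ x) ω z⟫ = ⟪x, z⟫ :=
    inner_rotateOnto _ (Submodule.mem_span_singleton_self x) ω z
  have hA : MeasurableSet (rotateOnto (ℝ ∙ x) ω ⁻¹' D) :=
    (D.isClosed.preimage ((continuous_rotateOnto _).comp (Continuous.prodMk_right ω))).measurableSet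
  have hAH : rotateOnto (ℝ ∙ x) ω ⁻¹' D ⊆ {z | 0 ≤ ⟪x, z⟫} :=
    fun z hz => (hD _ hz).trans_eq (hinner z)
  have hAcone ⦃t : ℝ⦄ (ht : 0 ≤ t) ⦃z : E⦄ (hz : z ∈ rotateOnto (ℝ ∙ x) ω ⁻¹' D) :
      t • z ∈ rotateOnto (ℝ ∙ x) ω ⁻¹' D := by
    rw [mem_preimage, rotateOnto_smul _ ω ht]
    exact D.smul_mem hz ht
  have hHcone ⦃t : ℝ⦄ (ht : 0 ≤ t) ⦃z : E⦄ (hz : 0 ≤ ⟪x, z⟫) : 0 ≤ ⟪x, t • z⟫ := by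
    rw [inner_smul_right]
    positivity
  have hS : ∀ z ∈ rotateOnto (ℝ ∙ x) ω ⁻¹' D,
      ∀ w ∈ (spindle c x ∩ {z | 0 ≤ ⟪x, z⟫}) \ (rotateOnto (ℝ ∙ x) ω ⁻¹' D),
      ‖z‖ ≤ ‖w‖ → z ∈ spindle c x := by
    rintro z hz w ⟨⟨hwS, hwH⟩, hwA⟩ hnorm
    refine mem_spindle_of_norm_le hc hwS hnorm ?_
    by_contra! hproj
    exact hwA (rotateOnto_mem_of_norm_le (D := D) hxD ω hz (hAH hz) hwH hnorm hproj.le)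
  rw [measure_eq_two_mul_measure_inter_halfSpace μ hx (X := spindle c x)
      fun _ => neg_mem_spindle_iff,
    measure_eq_two_mul_measure_inter_halfSpace μ hx (X := closedBall 0 1) fun _ => by simp,
    mul_left_comm, mul_left_comm (μ (_ ∩ _)) 2]
  gcongr 2 * ?_
  exact measure_closedBall_inter_mul_measure_le_of_cone μ hA hAH hAcone hHcone
    (isClosed_spindle c x) (isBounded_closedBall.subset (spindle_subset_closedBall hc x))
    (zero_mem_spindle c x) hS

lemma measure_closedBall_inter_mul_measure_spindle_le (hE : 1 < Module.finrank ℝ E) {c : ℝ}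
    (hc : 0 ≤ c) {x : E} (hx : x ≠ 0) (D : ProperCone ℝ E) (hxD : x ∈ D)
    (hD : ∀ z ∈ D, 0 ≤ ⟪x, z⟫) :
    μ (closedBall 0 1 ∩ D) * μ (spindle c x) ≤ μ (spindle c x ∩ D) * μ (closedBall 0 1) := by
  have := nontrivial_orthogonal_span_singleton hE x
  let σ := (Measure.addHaar : Measure (ℝ ∙ x)ᗮ).toSphere
  have hσ : σ univ ≠ 0 := Measure.measure_univ_ne_zero.2 (Measure.toSphere_ne_zero _)
  have hspindle : μ (spindle c x) ≠ ⊤ :=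
    (isBounded_closedBall.subset (spindle_subset_closedBall hc x)).measure_lt_top.ne
  refine (ENNReal.mul_le_mul_iff_right hσ (measure_ne_top _ _)).1 ?_
  calc σ univ * (μ (closedBall 0 1 ∩ D) * μ (spindle c x))
      = ∫⁻ ω, μ (closedBall 0 1 ∩ rotateOnto (ℝ ∙ x) ω ⁻¹' D) * μ (spindle c x) ∂σ := by
        rw [lintegral_mul_const' _ _ hspindle, ← mul_assoc,
          lintegral_measure_inter_preimage_rotateOnto _ _ μ measurableSet_closedBall
            D.isClosed.measurableSet fun ω z => by simp [norm_rotateOnto]]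
    _ ≤ ∫⁻ ω, μ (spindle c x ∩ rotateOnto (ℝ ∙ x) ω ⁻¹' D) * μ (closedBall 0 1) ∂σ :=
        lintegral_mono fun ω =>
          measure_closedBall_inter_preimage_rotateOnto_le μ hc hx D hxD hD ω
    _ = σ univ * (μ (spindle c x ∩ D) * μ (closedBall 0 1)) := by
        rw [lintegral_mul_const' _ _ measure_closedBall_lt_top.ne, ← mul_assoc,
          lintegral_measure_inter_preimage_rotateOnto _ _ μ (isClosed_spindle c x).measurableSet
            D.isClosed.measurableSet fun ω z => rotateOnto_mem_spindle_iff ω]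

end ConeInequality

section VoronoiCone

variable {E : Type*} [NormedAddCommGroup E] [InnerProductSpace ℝ E] [CompleteSpace E]

/-- The cone of the points `z` at which `⟪·, z⟫` is maximal over `Q` at `q`. When `Q` lies on a
sphere centred at the origin, it is the Voronoi cell of `q`. -/
noncomputable def voronoiCone (Q : Set E) (q : E) : ProperCone ℝ E :=
  ProperCone.innerDual ((q - ·) '' Q)

lemma mem_voronoiCone {Q : Set E} {q z : E} :
    z ∈ voronoiCone Q q ↔ ∀ p ∈ Q, ⟪p, z⟫ ≤ ⟪q, z⟫ := by
  simp only [voronoiCone, ProperCone.mem_innerDual, forall_mem_image, inner_sub_left, sub_nonneg]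

lemma self_mem_voronoiCone {Q : Set E} {q : E} (h : ∀ p ∈ Q, ‖p‖ ≤ ‖q‖) : q ∈ voronoiCone Q q := by
  refine mem_voronoiCone.2 fun p hp => (real_inner_le_norm p q).trans ?_
  rw [real_inner_self_eq_norm_mul_norm]
  exact mul_le_mul_of_nonneg_right (h p hp) (norm_nonneg q)

lemma inner_nonneg_of_mem_voronoiCone {Q : Set E} {q z : E} (hQ : ∀ y, ∃ p ∈ Q, ⟪p, y⟫ ≤ 0)
    (hz : z ∈ voronoiCone Q q) : 0 ≤ ⟪q, z⟫ := by
  obtain ⟨p, hp, hpz⟩ := hQ (-z)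
  rw [inner_neg_right, neg_nonpos] at hpz
  exact hpz.trans (mem_voronoiCone.1 hz p hp)

lemma iUnion_voronoiCone {Q : Set E} (hQ : IsCompact Q) (hne : Q.Nonempty) :
    ⋃ q ∈ Q, (voronoiCone Q q : Set E) = univ := by
  refine eq_univ_of_forall fun z => ?_
  obtain ⟨q, hq, hmax⟩ := hQ.exists_isMaxOn hne (f := (⟪·, z⟫)) (by fun_prop)
  exact mem_biUnion hq (mem_voronoiCone.2 fun p hp => hmax hp)

end VoronoiCone

section VoronoiDecomposition

variable {E : Type*} [NormedAddCommGroup E] [InnerProductSpace ℝ E] [FiniteDimensional ℝ E]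
  [MeasurableSpace E] [BorelSpace E]

lemma pairwise_aedisjoint_voronoiCone (μ : Measure E) [μ.IsAddHaarMeasure] (Q : Set E) :
    Q.Pairwise (Function.onFun (AEDisjoint μ) fun q => (voronoiCone Q q : Set E)) := by
  intro p hp q hq hpq
  refine measure_mono_null ?_ (measure_hyperplane_eq_zero μ (sub_ne_zero.2 hpq))
  rintro z ⟨hzp, hzq⟩
  change ⟪p - q, z⟫ = 0
  rw [inner_sub_left, sub_eq_zero]
  exact le_antisymm (mem_voronoiCone.1 hzq p hp) (mem_voronoiCone.1 hzp q hq)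

lemma volume_spindle_le_volume_iUnion (hE : 1 < Module.finrank ℝ E) {c : ℝ} (hc : 0 ≤ c)
    {x : E} (hx : x ≠ 0) {Q : Set E} (hfin : Q.Finite) (hnorm : ∀ q ∈ Q, ‖q‖ = ‖x‖)
    (hQ : ∀ y, ∃ q ∈ Q, ⟪q, y⟫ ≤ 0) :
    volume (spindle c x) ≤ volume (⋃ q ∈ Q, spindle c q ∩ voronoiCone Q q) := by
  have hcell (q : Q) :
      volume (closedBall 0 1 ∩ (voronoiCone Q q : Set E)) * volume (spindle c x) ≤
        volume (spindle c (q : E) ∩ voronoiCone Q q) * volume (closedBall (0 : E) 1) := by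
    rw [← volume_spindle_eq_of_norm_eq c (hnorm q q.2)]
    exact measure_closedBall_inter_mul_measure_spindle_le volume hE hc
      (norm_ne_zero_iff.1 ((hnorm q q.2).symm ▸ norm_ne_zero_iff.2 hx)) _
      (self_mem_voronoiCone fun p hp => ((hnorm p hp).trans (hnorm q q.2).symm).le)
      fun z hz => inner_nonneg_of_mem_voronoiCone hQ hz
  have hcover : closedBall (0 : E) 1 ⊆ ⋃ q ∈ Q, closedBall 0 1 ∩ voronoiCone Q q := by
    rw [← inter_iUnion₂, iUnion_voronoiCone hfin.isCompact ⟨_, (hQ 0).choose_spec.1⟩, inter_univ]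
  have hsum : volume (⋃ q ∈ Q, spindle c q ∩ voronoiCone Q q) =
      ∑' q : Q, volume (spindle c (q : E) ∩ voronoiCone Q q) :=
    measure_biUnion₀ hfin.countable
      ((pairwise_aedisjoint_voronoiCone volume Q).imp fun _ _ h =>
        h.mono inter_subset_right inter_subset_right)
      fun q _ => ((isClosed_spindle c q).inter (voronoiCone Q q).isClosed).nullMeasurableSet
  have hball : volume (closedBall (0 : E) 1) ≠ 0 := (measure_closedBall_pos _ _ one_pos).ne'
  refine (ENNReal.mul_le_mul_iff_right hball measure_closedBall_lt_top.ne).1 ?_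
  calc volume (closedBall (0 : E) 1) * volume (spindle c x)
      ≤ (∑' q : Q, volume (closedBall 0 1 ∩ (voronoiCone Q q : Set E))) * volume (spindle c x) := by
        gcongr
        exact (measure_mono hcover).trans (measure_biUnion_le _ hfin.countable _)
    _ ≤ ∑' q : Q, volume (spindle c (q : E) ∩ voronoiCone Q q) * volume (closedBall (0 : E) 1) := by
        rw [← ENNReal.tsum_mul_right]
        exact ENNReal.tsum_le_tsum hcell
    _ = volume (closedBall (0 : E) 1) * volume (⋃ q ∈ Q, spindle c q ∩ voronoiCone Q q) := by
        rw [ENNReal.tsum_mul_right, hsum, mul_comm]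

end VoronoiDecomposition

section ContactPoints

variable {E : Type*} [NormedAddCommGroup E] [InnerProductSpace ℝ E]

open Filter Topology in
lemma exists_mem_sphere_inner_sub_nonpos {P : Set E} (hP : IsCompact P) {a : E} {R : ℝ}
    (hPR : P ⊆ closedBall a R) (hmin : ∀ b ρ, P ⊆ closedBall b ρ → R ≤ ρ) (y : E) :
    ∃ p ∈ P ∩ sphere a R, ⟪p - a, y⟫ ≤ 0 := by
  by_contra! hpos
  have hlocal : ∀ p ∈ P, ∀ᶠ z : ℝ × E in 𝓝 (0, p),
      0 < z.1 → z.2 ∈ P → dist z.2 (a + z.1 • y) < R := by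
    intro p hp
    rcases (mem_closedBall.1 (hPR hp)).lt_or_eq with hlt | heq
    · have hcont : Continuous fun z : ℝ × E => dist z.2 (a + z.1 • y) := by fun_prop
      filter_upwards [(hcont.tendsto (0, p)).eventually_lt_const (by simpa using hlt)] with z hz _ _
      exact hz
    · have hcont : Continuous fun z : ℝ × E => z.1 * ‖y‖ ^ 2 - 2 * ⟪z.2 - a, y⟫ := by fun_prop
      filter_upwards [(hcont.tendsto (0, p)).eventually_lt_const
        (by simpa using hpos p ⟨hp, heq⟩ : _ < (0 : ℝ))] with z hz hz1 hzP
      have hzR : ‖z.2 - a‖ ≤ R := mem_closedBall_iff_norm.1 (hPR hzP)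
      have hR : 0 ≤ R := (norm_nonneg _).trans hzR
      rw [dist_eq_norm, ← sub_sub, ← sq_lt_sq₀ (norm_nonneg _) hR, norm_sub_sq_real,
        inner_smul_right, norm_smul, Real.norm_of_nonneg hz1.le]
      nlinarith [pow_le_pow_left₀ (norm_nonneg _) hzR 2, mul_neg_of_pos_of_neg hz1 hz]
  have hε := hP.eventually_forall_of_forall_eventually
    (P := fun (ε : ℝ) p => 0 < ε → p ∈ P → dist p (a + ε • y) < R) hlocal
  obtain ⟨ε, hε, hεpos⟩ := ((hε.filter_mono nhdsWithin_le_nhds).and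
    (self_mem_nhdsWithin : Ioi (0 : ℝ) ∈ 𝓝[>] 0)).exists
  obtain ⟨ρ, hρR, hρ⟩ : ∃ ρ < R, ∀ p ∈ P, dist p (a + ε • y) ≤ ρ :=
    hP.exists_forall_le' (α := ℝᵒᵈ) (f := fun p => dist p (a + ε • y)) (by fun_prop)
      fun p hp => hε p hp hεpos hp
  exact hρR.not_ge (hmin _ ρ hρ)

end ContactPoints

section Distance

variable {E : Type*} [NormedAddCommGroup E] [InnerProductSpace ℝ E]

lemma exists_norm_eq_one_inner_eq_neg_norm_starProjection (K : Submodule ℝ E) [Nontrivial K]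
    [K.HasOrthogonalProjection] (z : E) :
    ∃ v ∈ K, ‖v‖ = 1 ∧ ⟪z, v⟫ = -‖K.starProjection z‖ := by
  have hinner {v : E} (hv : v ∈ K) : ⟪z, v⟫ = ⟪K.starProjection z, v⟫ := by
    rw [K.inner_starProjection_left_eq_right, K.starProjection_eq_self_iff.2 hv]
  rcases eq_or_ne (K.starProjection z) 0 with hz | hz
  · obtain ⟨v, hv⟩ := exists_norm_eq K zero_le_one
    exact ⟨v, v.2, hv, by rw [hinner v.2, hz, inner_zero_left, norm_zero, neg_zero]⟩
  · have hv : -(‖K.starProjection z‖⁻¹ • K.starProjection z) ∈ K :=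
      K.neg_mem (K.smul_mem _ (K.starProjection_apply_mem z))
    refine ⟨_, hv, ?_, ?_⟩
    · rw [norm_neg, norm_smul, norm_inv, norm_norm, inv_mul_cancel₀ (norm_ne_zero_iff.2 hz)]
    rw [hinner hv, inner_neg_right, inner_smul_right, real_inner_self_eq_norm_sq]
    field_simp

lemma norm_le_of_dist_le_of_inner_nonpos {q y : E} {c r : ℝ} (hc : 0 ≤ c)
    (hcr : c ^ 2 + ‖q‖ ^ 2 = r ^ 2) (hqy : dist q y ≤ r) (hinner : ⟪q, y⟫ ≤ 0) : ‖y‖ ≤ c := by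
  rw [dist_eq_norm] at hqy
  have := pow_le_pow_left₀ (norm_nonneg _) hqy 2
  rw [norm_sub_sq_real] at this
  exact (abs_le_of_sq_le_sq' (by linarith) hc).2

lemma dist_le_of_mem_spindle {q y z : E} {c r : ℝ} (hc : 0 ≤ c) (hr : 0 ≤ r)
    (hcr : c ^ 2 + ‖q‖ ^ 2 = r ^ 2) (hz : z ∈ spindle c q) (hqz : 0 ≤ ⟪q, z⟫) (hy : ‖y‖ ≤ c)
    (hqy : dist q y ≤ r) : dist z y ≤ r := by
  let w := (ℝ ∙ q)ᗮ.starProjection z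
  let a := ⟪q, z⟫ / ‖q‖ ^ 2
  have hz_eq : z = a • q + w := by
    have := (ℝ ∙ q).starProjection_add_starProjection_orthogonal z
    rw [Submodule.starProjection_singleton] at this
    exact this.symm
  have ha0 : 0 ≤ a := by positivity
  have ha1 : a ≤ 1 := by
    refine div_le_one_of_le₀ ?_ (by positivity)
    have hzq := mem_closedBall_zero_iff.1 (spindle_subset_closedBall hc q hz)
    nlinarith [real_inner_le_norm q z, norm_nonneg q]
  have hwy : -(‖w‖ * c) ≤ ⟪w, y⟫ := by
    have := neg_le_of_abs_le (abs_real_inner_le_norm w y)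
    have : ‖w‖ * ‖y‖ ≤ ‖w‖ * c := by gcongr
    linarith
  have hqy' : ‖y‖ ^ 2 - c ^ 2 ≤ 2 * ⟪q, y⟫ := by
    rw [dist_eq_norm] at hqy
    have := pow_le_pow_left₀ (norm_nonneg _) hqy 2
    rw [norm_sub_sq_real] at this
    linarith
  have hzy : ⟪z, y⟫ = a * ⟪q, y⟫ + ⟪w, y⟫ := by
    rw [hz_eq, inner_add_left, real_inner_smul_left]
  have hz' : ‖z‖ ^ 2 + 2 * c * ‖w‖ ≤ ‖q‖ ^ 2 := hz
  have hyc : 0 ≤ c ^ 2 - ‖y‖ ^ 2 := sub_nonneg.2 (pow_le_pow_left₀ (norm_nonneg y) hy 2)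
  rw [dist_eq_norm, ← sq_le_sq₀ (norm_nonneg _) hr]
  calc ‖z - y‖ ^ 2 = ‖z‖ ^ 2 - a * (2 * ⟪q, y⟫) - 2 * ⟪w, y⟫ + ‖y‖ ^ 2 := by
        rw [norm_sub_sq_real, hzy]
        ring
    _ ≤ ‖z‖ ^ 2 - a * (‖y‖ ^ 2 - c ^ 2) - 2 * -(‖w‖ * c) + ‖y‖ ^ 2 := by gcongr
    _ = ‖z‖ ^ 2 + 2 * c * ‖w‖ + a * (c ^ 2 - ‖y‖ ^ 2) + ‖y‖ ^ 2 := by ring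
    _ ≤ ‖q‖ ^ 2 + 1 * (c ^ 2 - ‖y‖ ^ 2) + ‖y‖ ^ 2 := by gcongr
    _ = r ^ 2 := by rw [← hcr]; ring

end Distance

section BallHull

lemma mem_ballHull {r : ℝ} {X : Set (EuclideanSpace ℝ (Fin d))} {z : EuclideanSpace ℝ (Fin d)} :
    z ∈ ballHull r X ↔ ∀ y, X ⊆ closedBall y r → dist z y ≤ r := by
  simp [ballHull]

lemma ballHull_mono {r : ℝ} {X Y : Set (EuclideanSpace ℝ (Fin d))} (h : X ⊆ Y) :
    ballHull r X ⊆ ballHull r Y :=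
  biInter_subset_biInter_left fun _ hy => h.trans hy

lemma ballHull_vadd (r : ℝ) (a : EuclideanSpace ℝ (Fin d))
    (X : Set (EuclideanSpace ℝ (Fin d))) : ballHull r (a +ᵥ X) = a +ᵥ ballHull r X := by
  ext z
  rw [mem_vadd_set_iff_neg_vadd_mem, mem_ballHull, mem_ballHull,
    ← (Equiv.addLeft a).forall_congr_right]
  refine forall_congr' fun y => ?_
  change a +ᵥ X ⊆ closedBall (a +ᵥ y) r → dist z (a +ᵥ y) ≤ r ↔ _
  rw [← vadd_closedBall, vadd_set_subset_vadd_set_iff,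
    ← dist_vadd_cancel_left a (-a +ᵥ z), vadd_neg_vadd]

lemma ballHull_pair_subset_spindle (hd : 1 < d) {c r : ℝ} (hr : 0 ≤ r)
    {x : EuclideanSpace ℝ (Fin d)} (hcr : c ^ 2 + ‖x‖ ^ 2 = r ^ 2) :
    ballHull r {x, -x} ⊆ spindle c x := by
  intro z hz
  have := nontrivial_orthogonal_span_singleton (by rwa [finrank_euclideanSpace_fin]) x
  obtain ⟨v, hvx, hv, hzv⟩ := exists_norm_eq_one_inner_eq_neg_norm_starProjection (ℝ ∙ x)ᗮ z
  have hdist (y : EuclideanSpace ℝ (Fin d)) :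
      dist y (c • v) ≤ r ↔ ‖y‖ ^ 2 - 2 * c * ⟪y, v⟫ ≤ ‖x‖ ^ 2 := by
    rw [dist_eq_norm, ← sq_le_sq₀ (norm_nonneg _) hr, ← hcr, norm_sub_sq_real, inner_smul_right,
      norm_smul, hv, mul_one, Real.norm_eq_abs, sq_abs, add_comm, add_le_add_iff_left, mul_assoc]
  have hxv : ⟪x, v⟫ = 0 := Submodule.mem_orthogonal_singleton_iff_inner_right.1 hvx
  have hmem : {x, -x} ⊆ closedBall (c • v) r := by
    rintro y (rfl | rfl) <;> simp [hdist, hxv]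
  have := (hdist z).1 (mem_ballHull.1 hz _ hmem)
  rw [hzv] at this
  change ‖z‖ ^ 2 + 2 * c * ‖(ℝ ∙ x)ᗮ.starProjection z‖ ≤ ‖x‖ ^ 2
  linarith

lemma spindle_inter_voronoiCone_subset_ballHull {c r : ℝ} (hc : 0 ≤ c) (hr : 0 ≤ r)
    {Q : Set (EuclideanSpace ℝ (Fin d))} (hcr : ∀ q ∈ Q, c ^ 2 + ‖q‖ ^ 2 = r ^ 2)
    (hQ : ∀ y, ∃ q ∈ Q, ⟪q, y⟫ ≤ 0) {q : EuclideanSpace ℝ (Fin d)} (hq : q ∈ Q) :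
    spindle c q ∩ voronoiCone Q q ⊆ ballHull r Q := by
  rintro z ⟨hzS, hzV⟩
  refine mem_ballHull.2 fun y hy => ?_
  obtain ⟨p, hp, hpy⟩ := hQ y
  have hyc : ‖y‖ ≤ c := norm_le_of_dist_le_of_inner_nonpos hc (hcr p hp) (hy hp) hpy
  exact dist_le_of_mem_spindle hc hr (hcr q hq) hzS (inner_nonneg_of_mem_voronoiCone hQ hzV) hyc
    (hy hq)

lemma volume_spindle_le_volume_ballHull_of_subset_sphere (hd : 1 < d) {c r : ℝ} (hc : 0 ≤ c)
    (hr : 0 ≤ r) {x : EuclideanSpace ℝ (Fin d)} (hx : x ≠ 0) (hcr : c ^ 2 + ‖x‖ ^ 2 = r ^ 2)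
    {Q : Set (EuclideanSpace ℝ (Fin d))} (hfin : Q.Finite) (hnorm : ∀ q ∈ Q, ‖q‖ = ‖x‖)
    (hQ : ∀ y, ∃ q ∈ Q, ⟪q, y⟫ ≤ 0) : volume (spindle c x) ≤ volume (ballHull r Q) :=
  calc volume (spindle c x) ≤ volume (⋃ q ∈ Q, spindle c q ∩ voronoiCone Q q) :=
        volume_spindle_le_volume_iUnion (by rwa [finrank_euclideanSpace_fin]) hc hx hfin hnorm hQ
    _ ≤ volume (ballHull r Q) := measure_mono (iUnion₂_subset fun q hq =>
        spindle_inter_voronoiCone_subset_ballHull hc hr (fun q hq => by rw [hnorm q hq, hcr]) hQ hq)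

end BallHull

/-- Among r-ball convex hulls of finite sets of circumradius r₀, the r-spindle
has the smallest volume. -/
theorem volume_spindle_le_ballHull (r r₀ : ℝ) (hr : r₀ < r) (hr₀ : 0 < r₀)
    (hd : 1 < d) (P : Set (EuclideanSpace ℝ (Fin d))) (hPfin : P.Finite)
    (hcard : 1 < P.ncard)
    (hcr : IsLeast {ρ : ℝ | ∃ cc : EuclideanSpace ℝ (Fin d), P ⊆ closedBall cc ρ} r₀)
    (x : EuclideanSpace ℝ (Fin d)) (hx : ‖x‖ = r₀) :
    volume (ballHull r {x, -x}) ≤ volume (ballHull r P) := by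
  obtain ⟨⟨a, hPa⟩, hmin⟩ := hcr
  let c := √(r ^ 2 - r₀ ^ 2)
  let Q := -a +ᵥ (P ∩ sphere a r₀)
  have hc : c ^ 2 + ‖x‖ ^ 2 = r ^ 2 := by
    rw [hx, Real.sq_sqrt (by nlinarith), sub_add_cancel]
  have hQnorm : ∀ q ∈ Q, ‖q‖ = ‖x‖ := by
    rintro _ ⟨p, ⟨-, hp⟩, rfl⟩
    rw [hx, ← mem_sphere_iff_norm.1 hp]
    simp [sub_eq_neg_add]
  have hQ (y : EuclideanSpace ℝ (Fin d)) : ∃ q ∈ Q, ⟪q, y⟫ ≤ 0 := by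
    obtain ⟨p, hp, hpy⟩ := exists_mem_sphere_inner_sub_nonpos hPfin.isCompact hPa
      (fun b ρ h => hmin ⟨b, h⟩) y
    exact ⟨-a +ᵥ p, vadd_mem_vadd_set hp, by rwa [vadd_eq_add, neg_add_eq_sub]⟩
  calc volume (ballHull r {x, -x}) ≤ volume (spindle c x) :=
        measure_mono (ballHull_pair_subset_spindle hd (by linarith) hc)
    _ ≤ volume (ballHull r Q) :=
        volume_spindle_le_volume_ballHull_of_subset_sphere hd (Real.sqrt_nonneg _) (by linarith)
          (norm_pos_iff.1 (hx ▸ hr₀)) hc ((hPfin.inter_of_left _).vadd_set) hQnorm hQ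
    _ = volume (ballHull r (P ∩ sphere a r₀)) := by rw [ballHull_vadd, measure_vadd]
    _ ≤ volume (ballHull r P) := measure_mono (ballHull_mono inter_subset_left)
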